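/- arXiv:1905.08670 — 12 statements merged into one kernel-verified Lean document; each statement's English description precedes it below -/
import Mathlib

section
/- For every finite digraph D, the adichromatic number of D is at most one more than the minimum size of a feedback vertex set of D, i.e. adi(D) ≤ τ(D) + 1. -/
open Function

section Defs

variable {V : Type*}

/-- The vertex set `S` contains a directed cycle of the digraph `D`, i.e. there is a
closed directed walk of positive length all of whose vertices lie in `S`. -/
def HasDicycle (D : V → V → Prop) (S : Set V) : Prop :=
  ∃ v, Relation.TransGen (fun a b => a ∈ S ∧ b ∈ S ∧ D a b) v v

/-- A coloring of the vertices of the digraph `D` with `k` colors all of whose color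
classes are acyclic. -/
def IsAcyclicColoring (D : V → V → Prop) {k : ℕ} (c : V → Fin k) : Prop :=
  ∀ i, ¬ HasDicycle D (c ⁻¹' {i})

/-- A complete acyclic coloring of the digraph `D` with exactly `k` colors: every color is
used, every color class is acyclic, and the union of any two distinct color classes
contains a directed cycle. -/
def IsCompleteAcyclicColoring (D : V → V → Prop) {k : ℕ} (c : V → Fin k) : Prop :=
  Surjective c ∧ IsAcyclicColoring D c ∧
    ∀ i j : Fin k, i ≠ j → HasDicycle D (c ⁻¹' {i} ∪ c ⁻¹' {j})

/-- The dichromatic number: the minimum number of colors in an acyclic coloring. -/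
noncomputable def dichromaticNumber (D : V → V → Prop) : ℕ :=
  sInf {k | ∃ c : V → Fin k, IsAcyclicColoring D c}

/-- The adichromatic number: the maximum number of colors in a complete acyclic coloring. -/
noncomputable def adichromaticNumber (D : V → V → Prop) : ℕ :=
  sSup {k | ∃ c : V → Fin k, IsCompleteAcyclicColoring D c}

/-- A coloring of the vertices of the graph `G` all of whose color classes induce forests. -/
def IsArborealColoring (G : SimpleGraph V) {k : ℕ} (c : V → Fin k) : Prop :=
  ∀ i, (G.induce (c ⁻¹' {i})).IsAcyclic

/-- A complete arboreal coloring of `G` with exactly `k` colors: every color is used, every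
color class induces a forest, and the union of any two distinct color classes contains a
cycle. -/
def IsCompleteArborealColoring (G : SimpleGraph V) {k : ℕ} (c : V → Fin k) : Prop :=
  Surjective c ∧ IsArborealColoring G c ∧
    ∀ i j : Fin k, i ≠ j → ¬ (G.induce (c ⁻¹' {i} ∪ c ⁻¹' {j})).IsAcyclic

/-- The vertex arboricity: the minimum number of colors in an arboreal coloring. -/
noncomputable def vertexArboricity (G : SimpleGraph V) : ℕ :=
  sInf {k | ∃ c : V → Fin k, IsArborealColoring G c}

/-- The a-vertex arboricity: the maximum number of colors in a complete arboreal coloring. -/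
noncomputable def avertexArboricity (G : SimpleGraph V) : ℕ :=
  sSup {k | ∃ c : V → Fin k, IsCompleteArborealColoring G c}

/-- The minimum size of a directed feedback vertex set of the digraph `D`. -/
noncomputable def digraphFVSNumber [Fintype V] (D : V → V → Prop) : ℕ :=
  sInf {n | ∃ F : Finset V, F.card = n ∧ ¬ HasDicycle D ((↑F : Set V)ᶜ)}

/-- The minimum size of a feedback vertex set of the graph `G`. -/
noncomputable def graphFVSNumber [Fintype V] (G : SimpleGraph V) : ℕ :=
  sInf {n | ∃ F : Finset V, F.card = n ∧ (G.induce ((↑F : Set V)ᶜ)).IsAcyclic}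

/-- A complete coloring in the sense of the diachromatic number: all classes are acyclic
and for every ordered pair `(i, j)` of distinct colors there is an arc with tail colored
`j` and head colored `i`. -/
def IsCompleteDiColoring (D : V → V → Prop) {k : ℕ} (c : V → Fin k) : Prop :=
  Surjective c ∧ IsAcyclicColoring D c ∧
    ∀ i j : Fin k, i ≠ j → ∃ u v, D u v ∧ c u = j ∧ c v = i

/-- The diachromatic number of the digraph `D`. -/
noncomputable def diachromaticNumber (D : V → V → Prop) : ℕ :=
  sSup {k | ∃ c : V → Fin k, IsCompleteDiColoring D c}

/-- A complete proper coloring of the graph `G`: proper, surjective, and any two distinct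
colors appear together on some edge. -/
def IsCompleteProperColoring (G : SimpleGraph V) {k : ℕ} (c : V → Fin k) : Prop :=
  Surjective c ∧ (∀ u v, G.Adj u v → c u ≠ c v) ∧
    ∀ i j : Fin k, i ≠ j → ∃ u v, G.Adj u v ∧ c u = i ∧ c v = j

/-- The achromatic number: the maximum number of colors in a complete proper coloring. -/
noncomputable def achromaticNumber (G : SimpleGraph V) : ℕ :=
  sSup {k | ∃ c : V → Fin k, IsCompleteProperColoring G c}

/-- The subdigraph of `D` induced by the vertex set `S`. -/
def induceDigraph (D : V → V → Prop) (S : Set V) : S → S → Prop :=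
  fun a b => D a.1 b.1

/-- `D` is an orientation of the simple graph `G`: every arc of `D` is an edge of `G`, and
every edge of `G` is given exactly one of its two possible directions. -/
def IsOrientation (G : SimpleGraph V) (D : V → V → Prop) : Prop :=
  (∀ u v, D u v → G.Adj u v) ∧ ∀ u v, G.Adj u v → Xor' (D u v) (D v u)

end Defs

/-- For every finite digraph `D`, `adi(D) ≤ τ(D) + 1`. -/
theorem adichromatic_le_fvs_add_one {V : Type*} [Fintype V] (D : V → V → Prop)
    (hD : Irreflexive D) :
    adichromaticNumber D ≤ digraphFVSNumber D + 1 := by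
  classical
  apply csSup_le'
  rintro k ⟨c, -, -, hc⟩
  have hne : {n | ∃ F : Finset V, F.card = n ∧ ¬ HasDicycle D ((↑F : Set V)ᶜ)}.Nonempty := by
    refine ⟨_, Finset.univ, rfl, ?_⟩
    rintro ⟨v, hv⟩
    obtain ⟨w, hw, -⟩ := Relation.TransGen.head'_iff.1 hv
    simp at hw
  obtain ⟨F, hF, hacyc⟩ := Nat.sInf_mem hne
  change k ≤ sInf _ + 1
  rw [← hF]
  have h1 : ((F.image c)ᶜ).card ≤ 1 := by
    rw [Finset.card_le_one]
    intro i hi j hj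
    by_contra hij
    obtain ⟨v, hv⟩ := hc i j hij
    apply hacyc
    have hsub : ∀ a, a ∈ c ⁻¹' {i} ∪ c ⁻¹' {j} → a ∈ ((↑F : Set V)ᶜ) := by
      intro a ha haF
      have hm : c a ∈ F.image c := Finset.mem_image_of_mem c haF
      rcases ha with ha | ha
      · have ha' : c a = i := ha
        exact Finset.mem_compl.1 hi (ha' ▸ hm)
      · have ha' : c a = j := ha
        exact Finset.mem_compl.1 hj (ha' ▸ hm)
    exact ⟨v, Relation.TransGen.mono (fun a b h => ⟨hsub a h.1, hsub b h.2.1, h.2.2⟩) v v hv⟩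
  have h2 := Finset.card_add_card_compl (F.image c)
  have h3 : (F.image c).card ≤ F.card := Finset.card_image_le
  rw [Fintype.card_fin] at h2
  omega
end

section
/- For every finite simple graph G, the a-vertex arboricity of G is at most one more than the minimum size of a feedback vertex set of G, i.e. ava(G) ≤ τ(G) + 1. -/
open Function

/-- For every finite simple graph `G`, `ava(G) ≤ τ(G) + 1`. -/
theorem avertexArboricity_le_fvs_add_one {V : Type*} [Fintype V] (G : SimpleGraph V) :
    avertexArboricity G ≤ graphFVSNumber G + 1 := by
  classical
  have hne : {n | ∃ F : Finset V, F.card = n ∧ (G.induce ((↑F : Set V)ᶜ)).IsAcyclic}.Nonempty := by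
    refine ⟨_, Finset.univ, rfl, ?_⟩
    intro v
    exact absurd v.2 (by simp)
  obtain ⟨F, hF, hac⟩ := Nat.sInf_mem hne
  change F.card = graphFVSNumber G at hF
  unfold avertexArboricity
  refine csSup_le' ?_
  rintro k ⟨c, -, -, hc⟩
  rw [← hF]
  have h1 : ((F.image c)ᶜ).card ≤ 1 := by
    rw [Finset.card_le_one]
    intro i hi j hj
    by_contra hij
    refine hc i j hij ?_
    have hsub : c ⁻¹' {i} ∪ c ⁻¹' {j} ⊆ ((↑F : Set V)ᶜ) := by
      intro v hv hvF
      have hm : c v ∈ F.image c := Finset.mem_image_of_mem c hvF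
      rcases hv with hv | hv
      · have hv' : c v = i := hv
        exact Finset.mem_compl.1 hi (hv' ▸ hm)
      · have hv' : c v = j := hv
        exact Finset.mem_compl.1 hj (hv' ▸ hm)
    exact hac.comap (SimpleGraph.induceHomOfLE G hsub).toHom
      (SimpleGraph.induceHomOfLE G hsub).injective
  have h2 := Finset.card_image_le (s := F) (f := c)
  have h3 := Finset.card_add_card_compl (F.image c)
  rw [Fintype.card_fin] at h3
  omega
end

section
/- For all integers m, n ≥ 1, the a-vertex arboricity of the complete bipartite graph K_{m,n} equals min{m, n}. -/
open Function

lemma ava_acyclic_of_cover {V : Type*} (G : SimpleGraph V) (P : V → Prop)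
    (hE : ∀ u v, G.Adj u v → P u ∨ P v) (hP : ∀ u v, P u → P v → u = v) : G.IsAcyclic := by
  intro u w hw
  have h3 := hw.three_le_length
  have hnil : ¬ w.Nil := hw.not_nil
  have h1 := w.adj_snd hnil
  have hl := w.adj_penultimate hnil
  by_cases hu : P u
  · have h12 : G.Adj (w.getVert 1) (w.getVert 2) := w.adj_getVert_succ (by omega)
    have h01 : G.Adj u (w.getVert 1) := h1
    rcases hE _ _ h12 with h | h
    · exact h01.ne (hP _ _ hu h)
    · have h2 := hP _ _ h hu
      have := hw.getVert_endpoint_iff (i := 2) (by omega)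
      have := this.1 h2
      omega
  · have a := (hE _ _ h1).resolve_left hu
    have b := (hE _ _ hl).resolve_right hu
    exact hw.snd_ne_penultimate (hP _ _ a b)

lemma ava_not_acyclic {V : Type*} (G : SimpleGraph V) (a b c d : V)
    (h1 : G.Adj a b) (h2 : G.Adj b c) (h3 : G.Adj c d) (h4 : G.Adj d a)
    (hac : a ≠ c) (hbd : b ≠ d) : ¬ G.IsAcyclic := by
  intro h
  refine h (SimpleGraph.Walk.cons h1 (.cons h2 (.cons h3 (.cons h4 .nil)))) ?_
  have := h1.ne
  have := h2.ne
  have := h3.ne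
  have := h4.ne
  rw [SimpleGraph.Walk.cons_isCycle_iff]
  constructor
  · simp [SimpleGraph.Walk.isPath_def]; grind
  · simp; grind

lemma ava_upper {V : Type*} [DecidableEq V] (G : SimpleGraph V) (P : Finset V)
    (hP0 : P.Nonempty)
    (hE : ∀ u v, G.Adj u v → u ∈ P ∨ v ∈ P) {k : ℕ} (c : V → Fin k)
    (hc : IsCompleteArborealColoring G c) : k ≤ P.card := by
  by_contra hlt
  push Not at hlt
  obtain ⟨-, -, hc⟩ := hc
  have : ∃ i0, ∀ v ∈ P, c v ≠ i0 := by
    by_contra hh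
    push Not at hh
    have : (Finset.univ : Finset (Fin k)) ⊆ P.image c := by
      intro i _
      obtain ⟨v, hv, h⟩ := hh i
      exact Finset.mem_image.2 ⟨v, hv, h⟩
    have h1 := Finset.card_le_card this
    have h2 := Finset.card_image_le (s := P) (f := c)
    simp at h1
    omega
  obtain ⟨i0, hi0⟩ := this
  have h2 : ∀ j ∈ Finset.univ.erase i0, 2 ≤ (P.filter (fun v => c v = j)).card := by
    intro j hj
    by_contra hlt2
    have hle : (P.filter (fun v => c v = j)).card ≤ 1 := by omega
    rw [Finset.card_le_one] at hle
    refine hc i0 j (Finset.ne_of_mem_erase hj).symm ?_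
    apply ava_acyclic_of_cover _ (fun x => x.1 ∈ P)
    · intro u v h
      exact hE _ _ h
    · rintro ⟨u, hu⟩ ⟨v, hv⟩ hu' hv'
      have key : ∀ x, x ∈ (c ⁻¹' {i0} ∪ c ⁻¹' {j}) → x ∈ P → c x = j := by
        intro x hx hxP
        rcases hx with hx | hx
        · exact absurd hx (hi0 x hxP)
        · exact hx
      exact Subtype.ext (hle u (Finset.mem_filter.2 ⟨hu', key u hu hu'⟩) v
        (Finset.mem_filter.2 ⟨hv', key v hv hv'⟩))
  have h3 := Finset.card_eq_sum_card_fiberwise (f := c) (s := P) (t := Finset.univ.erase i0)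
    (by intro v hv; simpa using hi0 v hv)
  have h4 := Finset.sum_le_sum h2
  rw [← h3] at h4
  simp at h4
  have := hP0.card_pos
  omega

lemma ava_lower (m n : ℕ) (hm : 1 ≤ m) (hn : 1 ≤ n) :
    ∃ c : Fin m ⊕ Fin n → Fin (min m n),
      IsCompleteArborealColoring (completeBipartiteGraph (Fin m) (Fin n)) c := by
  have hk : 1 ≤ min m n := le_min hm hn
  let f : ℕ → Fin (min m n) := fun x => ⟨min x (min m n - 1), by omega⟩
  have hf : ∀ x y, x < min m n → y < min m n → f x = f y → x = y := by
    intro x y hx hy h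
    have := Fin.mk.inj_iff.1 h
    omega
  have hf' : ∀ i : Fin (min m n), f i = i := by
    intro i
    apply Fin.ext
    change min (i : ℕ) (min m n - 1) = i
    omega
  refine ⟨Sum.elim (fun i => f i) (fun j => f j), ?_, ?_, ?_⟩
  · intro i
    exact ⟨Sum.inl ⟨i, by omega⟩, hf' i⟩
  · intro i
    rcases le_total m n with h | h
    · apply ava_acyclic_of_cover _ (fun x => x.1.isLeft = true)
      · rintro ⟨u | u, hu⟩ ⟨v | v, hv⟩ h <;> simp_all
      · rintro ⟨u | u, hu⟩ ⟨v | v, hv⟩ h1 h2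
        · have : u = v := Fin.ext (hf u v (by omega) (by omega) (Eq.trans hu (Eq.symm hv)))
          subst this; rfl
        all_goals simp at h1 h2
    · apply ava_acyclic_of_cover _ (fun x => x.1.isRight = true)
      · rintro ⟨u | u, hu⟩ ⟨v | v, hv⟩ h <;> simp_all
      · rintro ⟨u | u, hu⟩ ⟨v | v, hv⟩ h1 h2
        rotate_left 3
        · have : u = v := Fin.ext (hf u v (by omega) (by omega) (Eq.trans hu (Eq.symm hv)))
          subst this; rfl
        all_goals simp at h1 h2
  · intro i j hij
    have hij' : (i : ℕ) ≠ j := fun h => hij (Fin.ext h)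
    apply ava_not_acyclic _
      ⟨Sum.inl ⟨i, by omega⟩, Or.inl (hf' i)⟩ ⟨Sum.inr ⟨i, by omega⟩, Or.inl (hf' i)⟩
      ⟨Sum.inl ⟨j, by omega⟩, Or.inr (hf' j)⟩ ⟨Sum.inr ⟨j, by omega⟩, Or.inr (hf' j)⟩
    case hac =>
      intro h
      have h' := Subtype.mk.inj h
      simp at h'
      exact hij' h'
    case hbd =>
      intro h
      have h' := Subtype.mk.inj h
      simp at h'
      exact hij' h'
    all_goals simp

/-- For all `m, n ≥ 1`, `ava(K_{m,n}) = min{m, n}`. -/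
theorem avertexArboricity_completeBipartite (m n : ℕ) (hm : 1 ≤ m) (hn : 1 ≤ n) :
    avertexArboricity (completeBipartiteGraph (Fin m) (Fin n)) = min m n := by
  have : IsGreatest {k | ∃ c : Fin m ⊕ Fin n → Fin k,
      IsCompleteArborealColoring (completeBipartiteGraph (Fin m) (Fin n)) c} (min m n) := by
    refine ⟨ava_lower m n hm hn, ?_⟩
    rintro k ⟨c, hc⟩
    haveI : Nonempty (Fin m) := ⟨⟨0, hm⟩⟩
    haveI : Nonempty (Fin n) := ⟨⟨0, hn⟩⟩
    apply le_min
    · have := ava_upper _ (Finset.univ.map (Embedding.inl : Fin m ↪ Fin m ⊕ Fin n))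
        (by simp) (by rintro (u | u) (v | v) h <;> simp_all) c hc
      simpa using this
    · have := ava_upper _ (Finset.univ.map (Embedding.inr : Fin n ↪ Fin m ⊕ Fin n))
        (by simp) (by rintro (u | u) (v | v) h <;> simp_all) c hc
      simpa using this
  exact this.csSup_eq
end

section
/- For every integer n ≥ 1, the a-vertex arboricity of the complete graph K_n equals ⌈n/2⌉. -/
open Function

lemma top_induce_acyclic_iff {n : ℕ} (S : Set (Fin n)) :
    ((⊤ : SimpleGraph (Fin n)).induce S).IsAcyclic ↔ S.ncard ≤ 2 := by
  constructor
  · intro h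
    by_contra! hc
    obtain ⟨a, b, c, ha, hb, hc, hab, hac, hbc⟩ := (Set.two_lt_ncard_iff (Set.toFinite S)).1 hc
    let G := (⊤ : SimpleGraph (Fin n)).induce S
    have h1 : G.Adj ⟨a, ha⟩ ⟨b, hb⟩ := by simpa [G] using hab
    have h2 : G.Adj ⟨b, hb⟩ ⟨c, hc⟩ := by simpa [G] using hbc
    have h3 : G.Adj ⟨c, hc⟩ ⟨a, ha⟩ := by simpa [G] using hac.symm
    refine h (SimpleGraph.Walk.cons h1 (.cons h2 (.cons h3 .nil))) ?_
    rw [SimpleGraph.Walk.cons_isCycle_iff]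
    simp [SimpleGraph.Walk.cons_isPath_iff, hab, hac, hbc, hab.symm, hac.symm, hbc.symm]
  · intro h v w hw
    have h3 := hw.three_le_length
    classical
    have := hw.support_nodup.length_le_card
    rw [← Nat.card_eq_fintype_card, Nat.card_coe_set_eq] at this
    simp at this
    omega

/-- For every `n ≥ 1`, `ava(K_n) = ⌈n/2⌉`. -/
theorem avertexArboricity_complete (n : ℕ) (hn : 1 ≤ n) :
    avertexArboricity (⊤ : SimpleGraph (Fin n)) = (n + 1) / 2 := by
  apply IsGreatest.csSup_eq
  constructor
  · refine ⟨fun v => ⟨v.1 / 2, by omega⟩, ?_, ?_, ?_⟩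
    · intro i
      exact ⟨⟨2 * i.1, by omega⟩, by ext; simp⟩
    · intro i
      rw [top_induce_acyclic_iff]
      by_contra! hc
      obtain ⟨a, b, c, ha, hb, hc, hab, hac, hbc⟩ := (Set.two_lt_ncard_iff (Set.toFinite _)).1 hc
      simp [Fin.ext_iff] at *
      omega
    · have key : ∀ i j : Fin ((n + 1) / 2), i < j → 2 < (((fun v : Fin n =>
          (⟨v.1 / 2, by omega⟩ : Fin ((n + 1) / 2))) ⁻¹' {i}) ∪ ((fun v : Fin n =>
          (⟨v.1 / 2, by omega⟩ : Fin ((n + 1) / 2))) ⁻¹' {j})).ncard := by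
        intro i j hij
        rw [Fin.lt_def] at hij
        rw [Set.two_lt_ncard_iff (Set.toFinite _)]
        refine ⟨⟨2 * i.1, by omega⟩, ⟨2 * i.1 + 1, by omega⟩, ⟨2 * j.1, by omega⟩, ?_, ?_, ?_, ?_, ?_, ?_⟩ <;>
          simp [Fin.ext_iff] <;> omega
      intro i j hij
      rw [top_induce_acyclic_iff, not_le]
      rcases lt_or_gt_of_ne hij with h | h
      · exact key i j h
      · rw [Set.union_comm]; exact key j i h
  · rintro k ⟨c, hs, -, hu⟩
    simp only [top_induce_acyclic_iff, not_le] at hu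
    have hle : ∀ i j, i ≠ j → 2 < (c ⁻¹' {i}).ncard + (c ⁻¹' {j}).ncard := fun i j h =>
      (hu i j h).trans_le (Set.ncard_union_le _ _)
    have hpos : ∀ i, 1 ≤ (c ⁻¹' {i}).ncard := by
      intro i
      obtain ⟨v, hv⟩ := hs i
      exact (Set.ncard_pos (Set.toFinite _)).2 ⟨v, hv⟩
    have hsum : n = ∑ i, (c ⁻¹' {i}).ncard := by
      have := Finset.card_eq_sum_card_fiberwise (f := c) (s := Finset.univ) (t := Finset.univ)
        (by simp)
      rw [Finset.card_univ, Fintype.card_fin] at this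
      refine this.trans (Finset.sum_congr rfl fun i _ => ?_)
      rw [← Set.ncard_coe_finset]
      congr 1
      ext; simp
    suffices 2 * k ≤ n + 1 by omega
    by_cases h : ∀ i, 2 ≤ (c ⁻¹' {i}).ncard
    · have := Finset.sum_le_sum (s := Finset.univ) fun i _ => h i
      simp at this
      omega
    · push Not at h
      obtain ⟨i, hi⟩ := h
      rw [← Finset.add_sum_erase _ _ (Finset.mem_univ i)] at hsum
      have := Finset.sum_le_sum (s := Finset.univ.erase i) (f := fun _ => 2)
        (g := fun j => (c ⁻¹' {j}).ncard) fun j hj => by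
          have := hle i j (Finset.ne_of_mem_erase hj).symm
          omega
      have h1 := hpos i
      rw [Finset.sum_const, Finset.card_erase_of_mem (Finset.mem_univ i), Finset.card_univ,
        Fintype.card_fin, smul_eq_mul] at this
      omega
end

section
/- For every integer n ≥ 1, let D_n be the orientation of the complete bipartite graph K_{n,n} with parts A = {a_1, …, a_n} and B = {b_1, …, b_n} in which the perfect matching edges are oriented a_i → b_i for each i, and every non-matching edge is oriented b_j → a_i (for i ≠ j). Then adi(D_n) = n. -/
open Function

/-- The orientation `D_n` of `K_{n,n}`: the perfect matching edges `a_i b_i` are directed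
`a_i → b_i`, and all non-matching edges `a_i b_j` (with `i ≠ j`) are directed `b_j → a_i`. -/
def matchingOrientation (n : ℕ) : (Fin n ⊕ Fin n) → (Fin n ⊕ Fin n) → Prop
  | Sum.inl i, Sum.inr j => i = j
  | Sum.inr j, Sum.inl i => i ≠ j
  | _, _ => False

theorem cyc_step {V : Type*} {R : V → V → Prop} {v : V} (h : Relation.TransGen R v v) :
    ∃ w, R v w ∧ Relation.TransGen R w w := by
  obtain ⟨w, h1, h2⟩ := Relation.TransGen.head'_iff.1 h
  exact ⟨w, h1, Relation.TransGen.tail' h2 h1⟩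

theorem hasDicycle_matching {n : ℕ} {S : Set (Fin n ⊕ Fin n)} :
    HasDicycle (matchingOrientation n) S ↔
      ∃ i j, i ≠ j ∧ Sum.inl i ∈ S ∧ Sum.inr i ∈ S ∧ Sum.inl j ∈ S ∧ Sum.inr j ∈ S := by
  constructor
  · rintro ⟨v, h⟩
    obtain ⟨w, ⟨a1, a2, a3⟩, h⟩ := cyc_step h
    obtain ⟨x, ⟨b1, b2, b3⟩, h⟩ := cyc_step h
    obtain ⟨y, ⟨c1, c2, c3⟩, h⟩ := cyc_step h
    obtain ⟨z, ⟨d1, d2, d3⟩, h⟩ := cyc_step h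
    rcases v with v | v <;> rcases w with w | w <;> simp only [matchingOrientation] at a3 <;>
    rcases x with x | x <;> simp only [matchingOrientation] at b3 <;>
    rcases y with y | y <;> simp only [matchingOrientation] at c3 <;>
    rcases z with z | z <;> simp only [matchingOrientation] at d3
    · subst a3 c3
      exact ⟨_, _, b3, c1, c2, a1, a2⟩
    · subst b3 d3
      exact ⟨_, _, c3, d1, d2, b1, b2⟩
  · rintro ⟨i, j, hij, h1, h2, h3, h4⟩
    refine ⟨Sum.inl i, ?_⟩
    refine .head (b := Sum.inr i) ⟨h1, h2, rfl⟩ ?_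
    refine .head (b := Sum.inl j) ⟨h2, h3, hij.symm⟩ ?_
    refine .head (b := Sum.inr j) ⟨h3, h4, rfl⟩ ?_
    exact .single ⟨h4, h1, hij⟩

theorem complete_le {n k : ℕ} (hn : 1 ≤ n) (c : Fin n ⊕ Fin n → Fin k)
    (hc : IsCompleteAcyclicColoring (matchingOrientation n) c) : k ≤ n := by
  obtain ⟨-, hac, hcomp⟩ := hc
  by_cases hk : k ≤ 1
  · omega
  simp only [IsAcyclicColoring, hasDicycle_matching] at hac hcomp
  simp only [Set.mem_union, Set.mem_preimage, Set.mem_singleton_iff] at hac hcomp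
  let r : Fin k := ⟨0, by omega⟩
  let v0 : Fin k := ⟨1, by omega⟩
  have hv0 : v0 ≠ r := by simp [r, v0]
  have H : ∀ v, ∃ e, v ≠ r → (c (.inl e) = v ∨ c (.inl e) = r) ∧ (c (.inr e) = v ∨ c (.inr e) = r)
      ∧ (c (.inl e) = v ∨ c (.inr e) = v) := by
    intro v
    by_cases hv : v = r
    · exact ⟨⟨0, hn⟩, fun h => absurd hv h⟩
    obtain ⟨i, j, hij, h1, h2, h3, h4⟩ := hcomp v r hv
    by_cases hi : c (.inl i) = v ∨ c (.inr i) = v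
    · exact ⟨i, fun _ => ⟨h1, h2, hi⟩⟩
    by_cases hj : c (.inl j) = v ∨ c (.inr j) = v
    · exact ⟨j, fun _ => ⟨h3, h4, hj⟩⟩
    exact absurd ⟨i, j, hij, by tauto, by tauto, by tauto, by tauto⟩ (hac r)
  choose f hf using H
  obtain ⟨g, hg, hg1, hg2⟩ : ∃ g, g ≠ f v0 ∧ (c (.inl g) = v0 ∨ c (.inl g) = r) ∧
      (c (.inr g) = v0 ∨ c (.inr g) = r) := by
    obtain ⟨i, j, hij, h1, h2, h3, h4⟩ := hcomp v0 r hv0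
    by_cases hi : i = f v0
    · exact ⟨j, fun h => hij (hi.trans h.symm), h3, h4⟩
    · exact ⟨i, hi, h1, h2⟩
  have key : ∀ v, v ≠ r → f v ≠ g := by
    intro v hv h
    have := hf v hv
    rw [h] at this
    by_cases hvv : v = v0
    · subst hvv; exact hg h.symm
    · grind
  have inj : Injective (fun v => if v = r then g else f v) := by
    intro u v huv
    have hu := hf u
    have hv := hf v
    have ku := key u
    have kv := key v
    by_cases h1 : u = r <;> by_cases h2 : v = r <;> simp only [h1, h2, if_true, if_false] at huv
    · rw [h1, h2]
    · exact absurd huv.symm (kv h2)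
    · exact absurd huv (ku h1)
    · have hu := hu h1
      have hv := hv h2
      rw [huv] at hu
      grind
  simpa using Fintype.card_le_of_injective _ inj

/-- For every `n ≥ 1`, `adi(D_n) = n`. -/
theorem adichromatic_matchingOrientation (n : ℕ) (hn : 1 ≤ n) :
    adichromaticNumber (matchingOrientation n) = n := by
  apply IsGreatest.csSup_eq
  refine ⟨⟨Sum.elim id id, ?_, ?_, ?_⟩, ?_⟩
  · intro i
    exact ⟨.inl i, rfl⟩
  · intro i
    rw [hasDicycle_matching]
    rintro ⟨a, b, hab, h1, -, h3, -⟩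
    simp at h1 h3
    exact hab (h1.trans h3.symm)
  · intro i j hij
    rw [hasDicycle_matching]
    exact ⟨i, j, hij, by simp⟩
  · rintro k ⟨c, hc⟩
    exact complete_le hn c hc
end

section
/- Let n ≥ 2 be an integer. If G is a finite simple graph that is the vertex-disjoint union of exactly C(n,2) = n(n−1)/2 cycles (each of length at least 3), then ava(G) = n; and if D is a finite digraph that is the vertex-disjoint union of exactly C(n,2) directed cycles (each of length at least 2), then adi(D) = n. -/
open Function

theorem abs_sup {V : Type} {n : ℕ} (hn : 2 ≤ n) (P : V → Fin (n.choose 2)) (H : Set V → Prop)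
    (hH : ∀ S, H S ↔ ∃ i, P ⁻¹' {i} ⊆ S)
    (h2 : ∀ i, ∃ u v, u ≠ v ∧ P u = i ∧ P v = i) :
    sSup {k | ∃ c : V → Fin k, Function.Surjective c ∧ (∀ i, ¬ H (c ⁻¹' {i})) ∧
      ∀ i j : Fin k, i ≠ j → H (c ⁻¹' {i} ∪ c ⁻¹' {j})} = n := by
  classical
  apply IsGreatest.csSup_eq
  constructor
  · have hcard : Nat.card {s : Finset (Fin n) // s ∈ Finset.powersetCard 2 Finset.univ}
        = Nat.card (Fin (n.choose 2)) := by
      simp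
    have e : {s : Finset (Fin n) // s ∈ Finset.powersetCard 2 Finset.univ} ≃ Fin (n.choose 2) :=
      Classical.choice (Finite.card_eq.1 hcard)
    have hxy : ∀ i, ∃ x y : Fin n, x ≠ y ∧ (e.symm i).1 = {x, y} := fun i =>
      Finset.card_eq_two.1 (Finset.mem_powersetCard.1 (e.symm i).2).2
    choose x y hne hxy using hxy
    choose a b hab ha hb using h2
    have hsurj : ∀ p q : Fin n, p ≠ q → ∃ i, ({x i, y i} : Finset (Fin n)) = {p, q} := by
      intro p q hpq
      refine ⟨e ⟨{p, q}, ?_⟩, ?_⟩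
      · simp [Finset.mem_powersetCard, Finset.card_pair hpq]
      · rw [← hxy]; simp
    let c : V → Fin n := fun v => if v = a (P v) then x (P v) else y (P v)
    have hca : ∀ i, c (a i) = x i := by intro i; simp [c, ha]
    have hcb : ∀ i, c (b i) = y i := by
      intro i
      simp only [c, hb]
      rw [if_neg (hab i).symm]
    have hc : ∀ v, c v = x (P v) ∨ c v = y (P v) := by
      intro v; simp only [c]; split_ifs <;> simp
    refine ⟨c, ?_, ?_, ?_⟩
    · intro p
      have : Nontrivial (Fin n) := Fin.nontrivial_iff_two_le.2 hn
      obtain ⟨q, hq⟩ := exists_ne p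
      obtain ⟨i, hi⟩ := hsurj p q hq.symm
      have : p ∈ ({x i, y i} : Finset (Fin n)) := by rw [hi]; simp
      simp only [Finset.mem_insert, Finset.mem_singleton] at this
      rcases this with h | h
      · exact ⟨a i, by rw [hca, h]⟩
      · exact ⟨b i, by rw [hcb, h]⟩
    · intro p hp
      obtain ⟨i, hi⟩ := (hH _).1 hp
      have h1 : c (a i) = p := hi (ha i)
      have h2 : c (b i) = p := hi (hb i)
      rw [hca] at h1
      rw [hcb] at h2
      exact hne i (h1.trans h2.symm)
    · intro p q hpq
      obtain ⟨i, hi⟩ := hsurj p q hpq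
      refine (hH _).2 ⟨i, fun v hv => ?_⟩
      have hv : P v = i := hv
      have : c v ∈ ({p, q} : Finset (Fin n)) := by
        rw [← hi]; have := hc v; rw [hv] at this; simpa using this
      simpa using this
  · rintro k ⟨c, -, h1, h3⟩
    by_contra hk
    have hk : n + 1 ≤ k := by omega
    have key : ∀ s : {s : Finset (Fin k) // s ∈ Finset.powersetCard 2 Finset.univ},
        ∃ i, ∀ z, z ∈ s.1 ↔ ∃ v, P v = i ∧ c v = z := by
      rintro ⟨s, hs⟩
      obtain ⟨p, q, hpq, rfl⟩ := Finset.card_eq_two.1 (Finset.mem_powersetCard.1 hs).2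
      obtain ⟨i, hi⟩ := (hH _).1 (h3 p q hpq)
      have hi' : ∀ v, P v = i → c v = p ∨ c v = q := fun v hv => by simpa using hi hv
      have hp := h1 p
      have hq := h1 q
      rw [hH] at hp hq
      push Not at hp hq
      obtain ⟨v, hv, hvp⟩ := Set.not_subset.1 (hp i)
      obtain ⟨w, hw, hwq⟩ := Set.not_subset.1 (hq i)
      refine ⟨i, fun z => ?_⟩
      simp only [Finset.mem_insert, Finset.mem_singleton]
      constructor
      · rintro (rfl | rfl)
        · exact ⟨w, hw, (hi' w hw).resolve_right hwq⟩
        · exact ⟨v, hv, (hi' v hv).resolve_left hvp⟩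
      · rintro ⟨v, hv, rfl⟩
        exact hi' v hv
    choose f hf using key
    have hinj : Function.Injective f := by
      intro s t hst
      ext z
      rw [hf, hf, hst]
    have := Fintype.card_le_of_injective f hinj
    simp at this
    have h4 := Nat.choose_le_choose 2 hk
    have h5 : (n+1).choose 2 = n + n.choose 2 := by
      rw [Nat.choose_succ_succ' n 1]; simp
    omega

theorem dig {V : Type} {m : ℕ} (D : V → V → Prop) (P : V → Fin m)
    (hP : ∀ u v, D u v → P u = P v) (ho : ∀ v, ∃! w, D v w)
    (hr : ∀ u v, P u = P v → Relation.ReflTransGen D u v)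
    (hs : Function.Surjective P) (S : Set V) : HasDicycle D S ↔ ∃ i, P ⁻¹' {i} ⊆ S := by
  constructor
  · rintro ⟨v, hv⟩
    refine ⟨P v, fun u hu => ?_⟩
    have hvu := hr v u hu.symm
    have : Relation.TransGen (fun a b => a ∈ S ∧ b ∈ S ∧ D a b) u v := by
      clear hu
      induction hvu with
      | refl => exact hv
      | tail h1 h2 ih =>
        rcases Relation.TransGen.head'_iff.1 ih with ⟨w, hw, hwv⟩
        obtain rfl := (ho _).unique h2 hw.2.2
        rcases Relation.reflTransGen_iff_eq_or_transGen.1 hwv with h | h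
        · rwa [← h]
        · exact h
    rcases Relation.TransGen.head'_iff.1 this with ⟨w, hw, hwv⟩
    exact hw.1
  · rintro ⟨i, hi⟩
    obtain ⟨v, rfl⟩ := hs i
    obtain ⟨w, hw, -⟩ := ho v
    refine ⟨v, Relation.TransGen.head' (b := w) ⟨hi rfl, hi (hP _ _ hw).symm, hw⟩ ?_⟩
    have h := hr w v (hP _ _ hw).symm
    have aux : ∀ u, Relation.ReflTransGen D w u → P u = P v ∧
        Relation.ReflTransGen (fun a b => a ∈ S ∧ b ∈ S ∧ D a b) w u := by
      intro u hu
      induction hu with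
      | refl => exact ⟨(hP _ _ hw).symm, .refl⟩
      | tail h1 h2 ih =>
        have h3 := (hP _ _ h2).symm.trans ih.1
        exact ⟨h3, ih.2.tail ⟨hi ih.1, hi h3, h2⟩⟩
    exact (aux v h).2

theorem grp {V : Type} [Fintype V] {m : ℕ} (G : SimpleGraph V) (P : V → Fin m)
    (hP : ∀ u v, G.Adj u v → P u = P v)
    (hc : ∀ i, (G.induce (P ⁻¹' {i})).Connected)
    (hd : ∀ v, (G.neighborSet v).ncard = 2) (S : Set V) :
    ¬ (G.induce S).IsAcyclic ↔ ∃ i, P ⁻¹' {i} ⊆ S := by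
  classical
  constructor
  · intro h
    simp only [SimpleGraph.IsAcyclic, not_forall, not_not] at h
    obtain ⟨v, p, hp⟩ := h
    refine ⟨P v, ?_⟩
    set q := p.map (SimpleGraph.Embedding.induce S).toHom with hq
    have hqc : q.IsCycle := hp.map (SimpleGraph.Embedding.induce (G := G) S).injective
    have hqS : ∀ u ∈ q.support, u ∈ S := by
      intro u hu
      rw [hq, SimpleGraph.Walk.support_map, List.mem_map] at hu
      obtain ⟨w, -, rfl⟩ := hu
      exact w.2
    have hcl : ∀ u w, u ∈ q.support → G.Adj u w → w ∈ q.support := by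
      intro u w hu huw
      have h1 := hqc.ncard_neighborSet_toSubgraph_eq_two hu
      have h2 : q.toSubgraph.neighborSet u = G.neighborSet u :=
        Set.eq_of_subset_of_ncard_le (q.toSubgraph.neighborSet_subset u) (by rw [h1, hd])
      have h3 : w ∈ q.toSubgraph.neighborSet u := by rw [h2]; exact huw
      have := q.toSubgraph.edge_vert (SimpleGraph.Subgraph.Adj.symm h3)
      exact q.mem_verts_toSubgraph.1 this
    intro u hu
    apply hqS
    obtain ⟨r⟩ := (hc (P v)).preconnected ⟨v, rfl⟩ ⟨u, hu⟩
    have aux : ∀ a b : (P ⁻¹' {P v.1}), (G.induce (P ⁻¹' {P v.1})).Walk a b →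
        a.1 ∈ q.support → b.1 ∈ q.support := by
      intro a b r
      induction r with
      | nil => exact id
      | cons h _ ih => exact fun ha => ih (hcl _ _ ha h)
    exact aux _ _ r q.start_mem_support
  · rintro ⟨i, hi⟩ hac
    have hac' : (G.induce (P ⁻¹' {i})).IsAcyclic :=
      hac.comap (SimpleGraph.induceHomOfLE G hi).toHom (SimpleGraph.induceHomOfLE G hi).injective
    have ht : (G.induce (P ⁻¹' {i})).IsTree := ⟨hc i, hac'⟩
    have hdeg : ∀ v : (P ⁻¹' {i}), ((G.induce (P ⁻¹' {i})).neighborSet v).ncard = 2 := by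
      intro v
      rw [← hd v.1, ← Set.ncard_image_of_injective _ Subtype.val_injective]
      congr 1
      ext w
      simp only [Set.mem_image, SimpleGraph.mem_neighborSet, Subtype.exists]
      constructor
      · rintro ⟨a, ha, h, rfl⟩; exact h
      · intro h; exact ⟨w, (hP _ _ h).symm.trans v.2, h, rfl⟩
    have : Nontrivial (P ⁻¹' {i}) := by
      obtain ⟨v⟩ := (hc i).nonempty
      have : ((G.induce (P ⁻¹' {i})).neighborSet v).Nonempty := by
        apply Set.nonempty_of_ncard_ne_zero; rw [hdeg]; norm_num
      obtain ⟨w, hw⟩ := this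
      exact ⟨v, w, ((SimpleGraph.mem_neighborSet _ _ _).1 hw).ne⟩
    obtain ⟨v, hv⟩ := ht.exists_vert_degree_one_of_nontrivial
    have := hdeg v
    rw [Set.ncard_eq_toFinset_card'] at this
    rw [← SimpleGraph.card_neighborFinset_eq_degree] at hv
    simp only [SimpleGraph.neighborFinset] at hv
    omega

/-- if a finite simple graph `G` is the vertex-disjoint union of exactly
`C(n,2)` cycles (each of length at least 3; equivalently, each part of the partition
induces a connected `2`-regular graph and no edges join different parts), then
`ava(G) = n`; and if a finite digraph `D` is the vertex-disjoint union of exactly `C(n,2)`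
directed cycles (each of length at least 2; equivalently, every vertex has a unique
out-neighbor and a unique in-neighbor, all arcs stay within parts, and each of the
`C(n,2)` nonempty parts is strongly connected), then `adi(D) = n`. -/
theorem disjoint_union_of_cycles (n : ℕ) (hn : 2 ≤ n) :
    (∀ (V : Type) [Fintype V] (G : SimpleGraph V) (P : V → Fin (n.choose 2)),
      (∀ u v, G.Adj u v → P u = P v) →
      (∀ i, (G.induce (P ⁻¹' {i})).Connected) →
      (∀ v, (G.neighborSet v).ncard = 2) →
      avertexArboricity G = n) ∧
    (∀ (V : Type) [Fintype V] (D : V → V → Prop), Irreflexive D →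
      ∀ P : V → Fin (n.choose 2),
      (∀ u v, D u v → P u = P v) →
      (∀ v, ∃! w, D v w) →
      (∀ v, ∃! w, D w v) →
      (∀ u v, P u = P v → Relation.ReflTransGen D u v) →
      Function.Surjective P →
      adichromaticNumber D = n) := by
  refine ⟨?_, ?_⟩
  · intro V _ G P hP hc hd
    have h2 : ∀ i, ∃ u v, u ≠ v ∧ P u = i ∧ P v = i := by
      intro i
      obtain ⟨v⟩ := (hc i).nonempty
      have : (G.neighborSet v.1).Nonempty := by
        apply Set.nonempty_of_ncard_ne_zero; rw [hd]; norm_num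
      obtain ⟨w, hw⟩ := this
      exact ⟨v.1, w, ((SimpleGraph.mem_neighborSet _ _ _).1 hw).ne, v.2, (hP _ _ hw).symm.trans v.2⟩
    have := abs_sup hn P (fun S => ¬ (G.induce S).IsAcyclic) (grp G P hP hc hd) h2
    simp only [not_not] at this
    exact this
  · intro V _ D hD P hP ho _ hr hs
    refine abs_sup hn P (HasDicycle D) (dig D P hP ho hr hs) ?_
    intro i
    obtain ⟨v, rfl⟩ := hs i
    obtain ⟨w, hw, -⟩ := ho v
    refine ⟨v, w, ?_, rfl, (hP _ _ hw).symm⟩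
    rintro rfl
    exact hD _ hw
end

section
/- For every integer n ≥ 1, the transitive tournament T_n on n vertices satisfies adi(T_n) = 1 and dac(T_n) = ⌈n/2⌉. -/
open Function

theorem tt_no_dicycle {n : ℕ} (S : Set (Fin n)) : ¬ HasDicycle (fun i j : Fin n => i < j) S := by
  rintro ⟨v, hv⟩
  have key : ∀ a b, Relation.TransGen (fun a b : Fin n => a ∈ S ∧ b ∈ S ∧ a < b) a b → a < b := by
    intro a b h
    induction h with
    | single h => exact h.2.2
    | tail _ h ih => exact ih.trans h.2.2
  exact lt_irrefl _ (key v v hv)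

theorem tt_dac_upper {n k : ℕ} (c : Fin n → Fin k)
    (hc : IsCompleteDiColoring (fun i j : Fin n => i < j) c) : k ≤ (n + 1) / 2 := by
  classical
  obtain ⟨hs, -, hp⟩ := hc
  let f : Fin k → ℕ := fun i => (Finset.univ.filter (fun v => c v = i)).card
  have hsum : n = ∑ i, f i := by
    have := Finset.card_eq_sum_card_fiberwise (f := c) (s := Finset.univ) (t := Finset.univ)
      (by intro x _; simp)
    simpa [f] using this
  have hpos : ∀ i, 1 ≤ f i := by
    intro i
    obtain ⟨v, hv⟩ := hs i
    exact Finset.card_pos.mpr ⟨v, by simp [hv]⟩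
  have hone : ∀ i j, i ≠ j → f i = 1 → f j = 1 → False := by
    intro i j hij hi hj
    obtain ⟨a, ha⟩ := Finset.card_eq_one.mp hi
    obtain ⟨b, hb⟩ := Finset.card_eq_one.mp hj
    have ha' : ∀ v, c v = i → v = a := fun v hv => by
      have : v ∈ Finset.univ.filter (fun v => c v = i) := by simp [hv]
      rw [ha] at this; simpa using this
    have hb' : ∀ v, c v = j → v = b := fun v hv => by
      have : v ∈ Finset.univ.filter (fun v => c v = j) := by simp [hv]
      rw [hb] at this; simpa using this
    obtain ⟨u, v, h1, h2, h3⟩ := hp i j hij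
    obtain ⟨x, y, h4, h5, h6⟩ := hp j i hij.symm
    rw [hb' u h2, ha' v h3] at h1
    rw [ha' x h5, hb' y h6] at h4
    exact lt_asymm h1 h4
  by_cases h : ∃ i, f i = 1
  · obtain ⟨i, hi⟩ := h
    have h2 : ∑ j ∈ Finset.univ.erase i, 2 ≤ ∑ j ∈ Finset.univ.erase i, f j := by
      apply Finset.sum_le_sum
      intro j hj
      have h3 := hpos j
      have h4 : f j ≠ 1 := fun h => hone j i (Finset.ne_of_mem_erase hj) h hi
      omega
    have h5 := Finset.add_sum_erase Finset.univ f (Finset.mem_univ i)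
    simp only [Finset.sum_const, Finset.card_erase_of_mem (Finset.mem_univ i),
      Finset.card_univ, Fintype.card_fin, smul_eq_mul] at h2
    omega
  · have h2 : ∑ j : Fin k, 2 ≤ ∑ j, f j := by
      apply Finset.sum_le_sum
      intro j hj
      have h3 := hpos j
      have h4 : f j ≠ 1 := fun h' => h ⟨j, h'⟩
      omega
    simp only [Finset.sum_const, Finset.card_univ, Fintype.card_fin, smul_eq_mul] at h2
    omega

theorem tt_dac_lower (n : ℕ) :
    ∃ c : Fin n → Fin ((n + 1) / 2), IsCompleteDiColoring (fun i j : Fin n => i < j) c := by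
  refine ⟨fun v => ⟨if v.1 < (n + 1) / 2 then v.1 else v.1 - (n + 1) / 2, ?_⟩, ?_,
    fun i => tt_no_dicycle _, ?_⟩
  · have := v.2
    split_ifs <;> omega
  · intro i
    refine ⟨⟨i.1, by omega⟩, ?_⟩
    ext
    simp
  · intro i j hij
    have hne : i.1 ≠ j.1 := fun h => hij (Fin.ext h)
    have hi := i.2
    have hj := j.2
    rcases lt_or_gt_of_ne hne with h | h
    · refine ⟨⟨j.1, by omega⟩, ⟨i.1 + (n + 1) / 2, by omega⟩, ?_, ?_, ?_⟩
      · simp only [Fin.mk_lt_mk]; omega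
      · ext; simp
      · ext; simp
    · refine ⟨⟨j.1, by omega⟩, ⟨i.1, by omega⟩, ?_, ?_, ?_⟩
      · simp only [Fin.mk_lt_mk]; omega
      · ext; simp
      · ext; simp

/-- For the transitive tournament `T_n` (`n ≥ 1`), `adi(T_n) = 1` and
`dac(T_n) = ⌈n/2⌉`. -/
theorem transitive_tournament_adi_dac (n : ℕ) (hn : 1 ≤ n) :
    adichromaticNumber (fun i j : Fin n => i < j) = 1 ∧
      diachromaticNumber (fun i j : Fin n => i < j) = (n + 1) / 2 := by
  constructor
  · apply IsGreatest.csSup_eq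
    constructor
    · refine ⟨fun _ => 0, ?_, fun i => tt_no_dicycle _, fun i j _ => by omega⟩
      intro i
      exact ⟨⟨0, hn⟩, Subsingleton.elim _ _⟩
    · rintro k ⟨c, -, -, hc⟩
      by_contra hk
      push Not at hk
      exact tt_no_dicycle _ (hc ⟨0, by omega⟩ ⟨1, hk⟩ (by simp))
  · apply IsGreatest.csSup_eq
    exact ⟨tt_dac_lower n, fun k ⟨c, hc⟩ => tt_dac_upper c hc⟩
end

section
/- Let D be a finite digraph and let ℓ be a positive integer. Then there exists a complete acyclic coloring of D using exactly ℓ colors if and only if χ⃗(D) ≤ ℓ ≤ adi(D). -/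
open Function

theorem aux_mono {V : Type*} {D : V → V → Prop} {S T : Set V} (h : S ⊆ T)
    (hS : HasDicycle D S) : HasDicycle D T := by
  obtain ⟨v, hv⟩ := hS
  exact ⟨v, Relation.TransGen.mono (fun a b hab => ⟨h hab.1, h hab.2.1, hab.2.2⟩) _ _ hv⟩

/-- There is an acyclic coloring with `n` colors that is constant on the `R`-related pairs. -/
def AuxQ {V : Type*} (D : V → V → Prop) (R : V → V → Prop) (n : ℕ) : Prop :=
  ∃ c : V → Fin n, IsAcyclicColoring D c ∧ ∀ u v, R u v → c u = c v

theorem aux_drop {V : Type*} {D : V → V → Prop} {R : V → V → Prop} {n : ℕ}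
    (c : V → Fin (n + 1)) (hc : IsAcyclicColoring D c) (hR : ∀ u v, R u v → c u = c v)
    (i : Fin (n + 1)) (hi : ∀ v, c v ≠ i) : AuxQ D R n := by
  have : ∀ v, ∃ j, i.succAbove j = c v := fun v => Fin.exists_succAbove_eq (hi v)
  choose d hd using this
  refine ⟨d, fun j hj => hc (i.succAbove j) (aux_mono ?_ hj), fun u v huv => ?_⟩
  · intro v hv
    have hv' : d v = j := hv
    show c v = _
    rw [← hd, hv']
  · apply Fin.succAbove_right_injective (p := i)
    rw [hd, hd, hR u v huv]

theorem aux_complete {V : Type*} {D : V → V → Prop} {R : V → V → Prop} {n : ℕ}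
    (h1 : AuxQ D R (n + 1)) (h2 : ¬ AuxQ D R n) :
    ∃ c : V → Fin (n + 1), IsCompleteAcyclicColoring D c := by
  obtain ⟨c, hc, hR⟩ := h1
  refine ⟨c, ?_, hc, ?_⟩
  · intro i
    by_contra hi
    push Not at hi
    exact h2 (aux_drop c hc hR i hi)
  · intro i j hij
    by_contra hcyc
    refine h2 (aux_drop (fun v => if c v = i then j else c v) ?_ ?_ i ?_)
    · intro m hm
      by_cases hmj : m = j
      · refine hcyc (aux_mono ?_ hm)
        intro v hv
        have hv' : (if c v = i then j else c v) = m := hv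
        show c v = i ∨ c v = j
        split_ifs at hv' with h
        · exact Or.inl h
        · exact Or.inr (hv'.trans hmj)
      · refine hc m (aux_mono ?_ hm)
        intro v hv
        have hv' : (if c v = i then j else c v) = m := hv
        show c v = m
        split_ifs at hv' with h
        · exact absurd hv'.symm hmj
        · exact hv'
    · intro u v huv
      simp only [hR u v huv]
    · intro v
      split_ifs with h
      · exact hij.symm
      · exact h

/-- The intermediate relations between two colorings. -/
def AuxR {V : Type*} {k m : ℕ} (h : V → Fin k) (f : V → Fin m) (i : ℕ) (u v : V) : Prop :=
  ((h u : ℕ) < i ∧ (h v : ℕ) < i ∧ f u = f v) ∨ (i ≤ (h u : ℕ) ∧ h u = h v)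

theorem aux_step {V : Type*} {D : V → V → Prop} {k m : ℕ} (h : V → Fin k) (f : V → Fin m)
    (hh : IsAcyclicColoring D h) (i : ℕ) (hi : i < k) (n : ℕ)
    (hQ : AuxQ D (AuxR h f (i + 1)) n) : AuxQ D (AuxR h f i) (n + 1) := by
  obtain ⟨c, hc, hR⟩ := hQ
  refine ⟨fun v => if (h v : ℕ) = i then Fin.last n else (c v).castSucc, ?_, ?_⟩
  · intro j
    refine Fin.lastCases ?_ (fun j => ?_) j
    · intro hj
      refine hh ⟨i, hi⟩ (aux_mono ?_ hj)
      intro v hv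
      have hv' : (if (h v : ℕ) = i then Fin.last n else (c v).castSucc) = Fin.last n := hv
      show h v = _
      split_ifs at hv' with h'
      · exact Fin.ext h'
      · exact absurd hv' (Fin.castSucc_lt_last _).ne
    · intro hj
      refine hc j (aux_mono ?_ hj)
      intro v hv
      have hv' : (if (h v : ℕ) = i then Fin.last n else (c v).castSucc) = j.castSucc := hv
      show c v = _
      split_ifs at hv' with h'
      · exact absurd hv'.symm (Fin.castSucc_lt_last _).ne
      · exact Fin.castSucc_injective _ hv'
  · intro u v huv
    dsimp only
    rcases huv with ⟨h1, h2, h3⟩ | ⟨h1, h2⟩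
    · rw [if_neg h1.ne, if_neg h2.ne, hR u v (Or.inl ⟨by omega, by omega, h3⟩)]
    · by_cases hu : (h u : ℕ) = i
      · rw [if_pos hu, if_pos (h2 ▸ hu)]
      · rw [if_neg hu, if_neg (h2 ▸ hu), hR u v (Or.inr ⟨by omega, h2⟩)]

theorem aux_main {V : Type*} {D : V → V → Prop} {k m : ℕ} (h : V → Fin k) (f : V → Fin m)
    (hh : IsCompleteAcyclicColoring D h) (hf : IsAcyclicColoring D f) (n : ℕ)
    (hm : m ≤ n + 1) (hk : n + 1 ≤ k) :
    ∃ c : V → Fin (n + 1), IsCompleteAcyclicColoring D c := by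
  classical
  rcases hk.eq_or_lt with rfl | hk
  · exact ⟨h, hh⟩
  obtain ⟨hsurj, hac, hcomp⟩ := hh
  have hend : AuxQ D (AuxR h f k) (n + 1) := by
    refine ⟨fun v => Fin.castLE hm (f v), ?_, ?_⟩
    · intro j hj
      have hj' := hj
      obtain ⟨v, hv⟩ := hj'
      obtain ⟨w, ⟨hw, -, -⟩, -⟩ := Relation.TransGen.head'_iff.1 hv
      have hw' : Fin.castLE hm (f v) = j := hw
      refine hf (f v) (aux_mono ?_ hj)
      intro x hx
      have hx' : Fin.castLE hm (f x) = j := hx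
      exact Fin.castLE_injective hm (hx'.trans hw'.symm)
    · rintro u v (⟨-, -, h3⟩ | ⟨h1, -⟩)
      · simp only [h3]
      · have := (h u).2
        omega
  have hstart : ¬ AuxQ D (AuxR h f 0) (n + 1) := by
    rintro ⟨c, hc, hR⟩
    choose s hs using hsurj
    obtain ⟨a, b, hab, he⟩ := Fintype.exists_ne_map_eq_of_card_lt (fun i => c (s i))
      (by simpa using hk)
    refine hc (c (s a)) (aux_mono ?_ (hcomp a b hab))
    rintro v (hv | hv)
    · exact hR v (s a) (Or.inr ⟨Nat.zero_le _, (show h v = a from hv).trans (hs a).symm⟩)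
    · exact (hR v (s b) (Or.inr ⟨Nat.zero_le _, (show h v = b from hv).trans (hs b).symm⟩)).trans
        he.symm
  have hex : ∃ i, AuxQ D (AuxR h f i) (n + 1) := ⟨k, hend⟩
  have hle : Nat.find hex ≤ k := Nat.find_min' hex hend
  have hspec := Nat.find_spec hex
  have hmin := fun {j} => @Nat.find_min _ _ hex j
  generalize Nat.find hex = i at hle hspec hmin
  cases i with
  | zero => exact absurd hspec hstart
  | succ i =>
    exact aux_complete hspec fun hq =>
      hmin (Nat.lt_succ_self i) (aux_step h f hac i (by omega) n hq)

/-- a finite digraph `D` has a complete acyclic coloring with exactly `ℓ`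
colors iff `χ⃗(D) ≤ ℓ ≤ adi(D)`. -/
theorem interpolation_adichromatic {V : Type*} [Fintype V] (D : V → V → Prop)
    (hD : Irreflexive D) (ℓ : ℕ) (hℓ : 1 ≤ ℓ) :
    (∃ c : V → Fin ℓ, IsCompleteAcyclicColoring D c) ↔
      dichromaticNumber D ≤ ℓ ∧ ℓ ≤ adichromaticNumber D := by
  have hbdd : BddAbove {k | ∃ c : V → Fin k, IsCompleteAcyclicColoring D c} := by
    refine ⟨Fintype.card V, ?_⟩
    rintro k ⟨c, hc, -⟩
    simpa using Fintype.card_le_of_surjective c hc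
  constructor
  · rintro ⟨c, hc⟩
    exact ⟨Nat.sInf_le ⟨c, hc.2.1⟩, le_csSup hbdd ⟨c, hc⟩⟩
  · rintro ⟨h1, h2⟩
    have hne : {k | ∃ c : V → Fin k, IsCompleteAcyclicColoring D c}.Nonempty := by
      by_contra hemp
      rw [Set.not_nonempty_iff_eq_empty] at hemp
      unfold adichromaticNumber at h2
      rw [hemp] at h2
      simp at h2
      omega
    obtain ⟨h, hh⟩ := Nat.sSup_mem hne hbdd
    obtain ⟨f, hf⟩ := Nat.sInf_mem (s := {k | ∃ c : V → Fin k, IsAcyclicColoring D c})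
      ⟨_, h, hh.2.1⟩
    obtain ⟨n, rfl⟩ : ∃ n, ℓ = n + 1 := ⟨ℓ - 1, by omega⟩
    exact aux_main h f hh hf n h1 h2
end

section
/- Let G be a finite simple graph and let ℓ be a positive integer. Then there exists a complete arboreal coloring of G using exactly ℓ colors if and only if va(G) ≤ ℓ ≤ ava(G). -/
open Function

theorem acyc_mono {V : Type*} (G : SimpleGraph V) {S T : Set V} (h : S ⊆ T)
    (hT : (G.induce T).IsAcyclic) : (G.induce S).IsAcyclic :=
  hT.comap (SimpleGraph.induceHomOfLE G h).toHom (SimpleGraph.induceHomOfLE G h).injective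

/-- There is an arboreal coloring with `n` colors constant on the `c`-classes within `S`. -/
def Coarse {V : Type*} (G : SimpleGraph V) {k : ℕ} (c : V → Fin k) (S : Finset V) (n : ℕ) :
    Prop :=
  ∃ g : V → Fin n, IsArborealColoring G g ∧ ∀ u ∈ S, ∀ v ∈ S, c u = c v → g u = g v

theorem coarse_drop {V : Type*} (G : SimpleGraph V) {k : ℕ} (c : V → Fin k) (S : Finset V)
    {n : ℕ} (g : V → Fin n) (hg : IsArborealColoring G g)
    (hr : ∀ u ∈ S, ∀ v ∈ S, c u = c v → g u = g v) (i : Fin n) (hi : ∀ v, g v ≠ i) :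
    ∃ m < n, Coarse G c S m := by
  obtain _ | m := n
  · exact i.elim0
  · have hx : ∀ v, ∃ y, i.succAbove y = g v := fun v => Fin.exists_succAbove_eq (hi v)
    choose f hf using hx
    refine ⟨m, Nat.lt_succ_self m, f, fun a => ?_, fun u hu v hv huv => ?_⟩
    · refine acyc_mono G ?_ (hg (i.succAbove a))
      intro v hv
      have hv' : f v = a := hv
      change g v = _
      rw [← hf, hv']
    · apply Fin.succAbove_right_injective (p := i)
      rw [hf, hf]
      exact hr u hu v hv huv

theorem coarse_complete {V : Type*} (G : SimpleGraph V) {k : ℕ} (c : V → Fin k) (S : Finset V)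
    {n : ℕ} (h : Coarse G c S n) (hmin : ∀ m, Coarse G c S m → n ≤ m) :
    ∃ g : V → Fin n, IsCompleteArborealColoring G g := by
  obtain ⟨g, hg, hr⟩ := h
  refine ⟨g, ?_, hg, ?_⟩
  · intro i
    by_contra hi
    push Not at hi
    obtain ⟨m, hm, hc⟩ := coarse_drop G c S g hg hr i hi
    have := hmin m hc
    omega
  · intro i j hij hac
    obtain ⟨m, hm, hc⟩ := coarse_drop G c S (fun v => if g v = i then j else g v) (by
      intro a
      by_cases ha : a = j
      · refine acyc_mono G ?_ hac
        intro v hv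
        have hv' : (if g v = i then j else g v) = a := hv
        change g v = i ∨ g v = j
        grind
      · refine acyc_mono G ?_ (hg a)
        intro v hv
        have hv' : (if g v = i then j else g v) = a := hv
        change g v = a
        grind) (by
      intro u hu v hv huv
      simp only [hr u hu v hv huv]) i (by
      intro v
      grind)
    have := hmin m hc
    omega

theorem coarse_step {V : Type*} [DecidableEq V] (G : SimpleGraph V) {k : ℕ} (c : V → Fin k)
    (hc : IsArborealColoring G c) (S : Finset V) (x : V) {n : ℕ} (h : Coarse G c S n) :
    Coarse G c (insert x S) (n + 1) := by
  obtain ⟨g, hg, hr⟩ := h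
  refine ⟨fun w => if w ∈ insert x S ∧ c w = c x then Fin.last n else (g w).castSucc, ?_, ?_⟩
  · intro a
    induction a using Fin.lastCases with
    | last =>
      refine acyc_mono G ?_ (hc (c x))
      intro v hv
      have hv' : (if v ∈ insert x S ∧ c v = c x then Fin.last n else (g v).castSucc)
        = Fin.last n := hv
      change c v = c x
      by_contra hne
      rw [if_neg (fun h => hne h.2)] at hv'
      exact Fin.castSucc_ne_last _ hv'
    | cast a =>
      refine acyc_mono G ?_ (hg a)
      intro v hv
      have hv' : (if v ∈ insert x S ∧ c v = c x then Fin.last n else (g v).castSucc)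
        = a.castSucc := hv
      change g v = a
      split_ifs at hv' with h1
      · exact absurd hv'.symm (Fin.castSucc_ne_last _)
      · exact Fin.castSucc_injective _ hv'
  · intro u hu v hv huv
    by_cases h1 : c v = c x
    · simp only [hu, hv, huv, h1, and_self, if_true]
    · have h2 : c u ≠ c x := huv ▸ h1
      simp only [h1, h2, and_false, if_false]
      rw [hr u _ v _ huv]
      · exact (Finset.mem_insert.1 hu).resolve_left (fun h => h2 (h ▸ rfl))
      · exact (Finset.mem_insert.1 hv).resolve_left (fun h => h1 (h ▸ rfl))

/-- a finite simple graph `G` has a complete arboreal coloring with exactly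
`ℓ` colors iff `va(G) ≤ ℓ ≤ ava(G)`. -/
theorem interpolation_avertexArboricity {V : Type*} [Fintype V] (G : SimpleGraph V)
    (ℓ : ℕ) (hℓ : 1 ≤ ℓ) :
    (∃ c : V → Fin ℓ, IsCompleteArborealColoring G c) ↔
      vertexArboricity G ≤ ℓ ∧ ℓ ≤ avertexArboricity G := by
  classical
  have hbdd : BddAbove {k | ∃ c : V → Fin k, IsCompleteArborealColoring G c} := by
    refine ⟨Fintype.card V, ?_⟩
    rintro k ⟨c, hc⟩
    simpa using Fintype.card_le_of_surjective c hc.1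
  constructor
  · rintro ⟨c, hc⟩
    exact ⟨Nat.sInf_le ⟨c, hc.2.1⟩, le_csSup hbdd ⟨c, hc⟩⟩
  · rintro ⟨h1, h2⟩
    have hne : {k | ∃ c : V → Fin k, IsCompleteArborealColoring G c}.Nonempty := by
      by_contra hne
      rw [Set.not_nonempty_iff_eq_empty] at hne
      rw [avertexArboricity, hne] at h2
      simp at h2
      omega
    obtain ⟨c, hc⟩ := Nat.sSup_mem hne hbdd
    change ℓ ≤ sSup _ at h2
    generalize sSup {k | ∃ c : V → Fin k, IsCompleteArborealColoring G c} = k at c hc h2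
    have hmem : ∀ S, Coarse G c S (sInf {n | Coarse G c S n}) := fun S =>
      Nat.sInf_mem (s := {n | Coarse G c S n}) ⟨k, c, hc.2.1, fun _ _ _ _ h => h⟩
    have key : ∀ S : Finset V, ℓ ≤ sInf {n | Coarse G c S n} →
        ∃ S', sInf {n | Coarse G c S' n} = ℓ := by
      intro S
      induction S using Finset.induction_on with
      | empty =>
        intro h
        refine ⟨∅, le_antisymm (le_trans ?_ h1) h⟩
        obtain ⟨f, hf⟩ := Nat.sInf_mem (s := {k | ∃ c : V → Fin k, IsArborealColoring G c})
          ⟨k, c, hc.2.1⟩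
        exact Nat.sInf_le ⟨f, hf, by simp⟩
      | insert x S _ ih =>
        intro h
        by_cases h3 : ℓ ≤ sInf {n | Coarse G c S n}
        · exact ih h3
        · have := Nat.sInf_le (s := {n | Coarse G c (insert x S) n})
            (coarse_step G c hc.2.1 S x (hmem S))
          exact ⟨insert x S, by omega⟩
    obtain ⟨S, hS⟩ := key Finset.univ (by
      refine h2.trans ?_
      obtain ⟨g, hg, hr⟩ := hmem Finset.univ
      generalize sInf {n | Coarse G c Finset.univ n} = n at g hg hr
      by_contra hlt
      obtain ⟨s, hs⟩ := hc.1.hasRightInverse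
      obtain ⟨i, j, hij, he⟩ := Fintype.exists_ne_map_eq_of_card_lt (fun i => g (s i))
        (by simpa using hlt)
      refine hc.2.2 i j hij (acyc_mono G ?_ (hg (g (s i))))
      rintro v (hv | hv)
      · have hv' : c v = i := hv
        exact hr _ (Finset.mem_univ _) _ (Finset.mem_univ _) (by rw [hs, hv'])
      · have hv' : c v = j := hv
        exact (hr _ (Finset.mem_univ _) (s j) (Finset.mem_univ _) (by rw [hs, hv'])).trans he.symm)
    have hm := hmem S
    have hmin : ∀ m, Coarse G c S m → ℓ ≤ m := fun m hm => hS ▸ Nat.sInf_le hm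
    rw [hS] at hm
    exact coarse_complete G c S hm hmin
end

section
/- Let G be a finite simple graph and let v be a vertex of G. Then ava(G) − 1 ≤ ava(G − v) ≤ ava(G), where G − v is the graph obtained from G by deleting v. Consequently, if G₁ is an induced subgraph of G₂, then ava(G₁) ≤ ava(G₂). -/
open Function

def AvaA {V : Type} (G : SimpleGraph V) (S : Set V) : Prop := (G.induce S).IsAcyclic

theorem avaA_mono {V : Type} (G : SimpleGraph V) {S T : Set V} (h : S ⊆ T) (hT : AvaA G T) :
    AvaA G S :=
  hT.comap (SimpleGraph.induceHomOfLE G h).toHom (SimpleGraph.induceHomOfLE G h).injective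

theorem avaA_single {V : Type} (G : SimpleGraph V) (v : V) : AvaA G {v} := by
  unfold AvaA
  exact SimpleGraph.IsAcyclic.of_subsingleton

def AvaP {V : Type} (G : SimpleGraph V) (S : Set V) (k : ℕ) : Prop :=
  ∃ (ι : Type) (_ : Fintype ι) (F : ι → Set V), Fintype.card ι = k ∧ (∀ i, (F i).Nonempty) ∧
    (∀ i j x, x ∈ F i → x ∈ F j → i = j) ∧ (∀ x, x ∈ S ↔ ∃ i, x ∈ F i) ∧ (∀ i, AvaA G (F i)) ∧
    ∀ i j, i ≠ j → ¬ AvaA G (F i ∪ F j)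

theorem avaA_image {V W : Type} (G : SimpleGraph V) (f : W → V) (hf : Injective f) (T : Set W) :
    ((G.comap f).induce T).IsAcyclic ↔ AvaA G (f '' T) := by
  let e : (G.comap f).induce T ≃g G.induce (f '' T) :=
    { toEquiv := Equiv.Set.image f T hf
      map_rel_iff' := by intro a b; rfl }
  exact e.isAcyclic_iff

theorem avaP_iff {V W : Type} (G : SimpleGraph V) (f : W → V) (hf : Injective f) (k : ℕ) :
    (∃ c : W → Fin k, IsCompleteArborealColoring (G.comap f) c) ↔ AvaP G (Set.range f) k := by
  constructor
  · rintro ⟨c, hs, ha, hc⟩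
    refine ⟨Fin k, inferInstance, fun i => f '' (c ⁻¹' {i}), by simp, ?_, ?_, ?_, ?_, ?_⟩
    · intro i
      obtain ⟨w, hw⟩ := hs i
      exact ⟨f w, w, hw, rfl⟩
    · rintro i j x ⟨a, ha, rfl⟩ ⟨b, hb, hab⟩
      have := hf hab
      subst this
      exact ha.symm.trans hb
    · intro x
      constructor
      · rintro ⟨w, rfl⟩
        exact ⟨c w, w, rfl, rfl⟩
      · rintro ⟨i, w, _, rfl⟩
        exact ⟨w, rfl⟩
    · intro i
      exact (avaA_image G f hf _).1 (ha i)
    · intro i j hij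
      rw [← Set.image_union, ← avaA_image G f hf]
      exact hc i j hij
  · rintro ⟨ι, _, F, hk, hn, hd, hS, hA, hC⟩
    have e : ι ≃ Fin k := Fintype.equivFinOfCardEq hk
    have h1 : ∀ w, ∃ i, f w ∈ F i := fun w => (hS _).1 ⟨w, rfl⟩
    choose c hc using h1
    have key : ∀ i, f '' ((fun w => e (c w)) ⁻¹' {i}) = F (e.symm i) := by
      intro i
      ext x
      constructor
      · rintro ⟨w, hw, rfl⟩
        have : e (c w) = i := hw
        rw [← this, e.symm_apply_apply]
        exact hc w
      · intro hx
        obtain ⟨w, rfl⟩ := (hS x).2 ⟨_, hx⟩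
        refine ⟨w, ?_, rfl⟩
        have := hd _ _ _ hx (hc w)
        show e (c w) = i
        rw [← this, e.apply_symm_apply]
    refine ⟨fun w => e (c w), ?_, ?_, ?_⟩
    · intro i
      obtain ⟨x, hx⟩ := hn (e.symm i)
      rw [← key] at hx
      obtain ⟨w, hw, _⟩ := hx
      exact ⟨w, hw⟩
    · intro i
      rw [avaA_image G f hf, key]
      exact hA _
    · intro i j hij
      rw [avaA_image G f hf, Set.image_union, key, key]
      exact hC _ _ (fun h => hij (e.symm.injective h))

theorem avaP_insert {V : Type} (G : SimpleGraph V) (S : Set V) (v : V) (hv : v ∉ S) (k : ℕ)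
    (h : AvaP G S k) : ∃ k', k ≤ k' ∧ AvaP G (insert v S) k' := by
  classical
  obtain ⟨ι, _, F, hk, hn, hd, hS, hA, hC⟩ := h
  have hvF : ∀ i, v ∉ F i := fun i hi => hv ((hS v).2 ⟨i, hi⟩)
  by_cases hex : ∃ i, AvaA G (insert v (F i))
  · obtain ⟨a, ha⟩ := hex
    refine ⟨k, le_rfl, ι, inferInstance, fun i => {x | x ∈ F i ∨ (i = a ∧ x = v)}, hk, ?_, ?_, ?_, ?_, ?_⟩
    · intro i
      obtain ⟨x, hx⟩ := hn i
      exact ⟨x, Or.inl hx⟩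
    · rintro i j x (hi | ⟨rfl, rfl⟩) (hj | ⟨rfl, h⟩)
      · exact hd _ _ _ hi hj
      · subst h; exact absurd hi (hvF _)
      · exact absurd hj (hvF _)
      · rfl
    · intro x
      simp only [Set.mem_insert_iff, hS, Set.mem_ofPred_eq]
      constructor
      · rintro (rfl | ⟨i, hi⟩)
        · exact ⟨a, Or.inr ⟨rfl, rfl⟩⟩
        · exact ⟨i, Or.inl hi⟩
      · rintro ⟨i, hi | ⟨_, h⟩⟩
        · exact Or.inr ⟨i, hi⟩
        · exact Or.inl h
    · intro i
      by_cases hi : i = a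
      · subst hi
        refine avaA_mono G ?_ ha
        rintro x (h | ⟨_, h⟩)
        · exact Or.inr h
        · exact Or.inl h
      · refine avaA_mono G ?_ (hA i)
        rintro x (h | ⟨h, _⟩)
        · exact h
        · exact absurd h hi
    · intro i j hij h
      refine hC i j hij (avaA_mono G ?_ h)
      rintro x (h | h)
      · exact Or.inl (Or.inl h)
      · exact Or.inr (Or.inl h)
  · push Not at hex
    refine ⟨k + 1, by omega, Option ι, inferInstance, fun o => o.elim {v} F, by simp [hk], ?_, ?_, ?_, ?_, ?_⟩
    · rintro (_ | i)
      · exact ⟨v, rfl⟩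
      · exact hn i
    · rintro (_ | i) (_ | j) x hi hj
      · rfl
      · have : x = v := hi
        subst this; exact absurd hj (hvF _)
      · have : x = v := hj
        subst this; exact absurd hi (hvF _)
      · exact congrArg some (hd _ _ _ hi hj)
    · intro x
      simp only [Set.mem_insert_iff, hS, Option.exists, Option.elim, Set.mem_singleton_iff]
    · rintro (_ | i)
      · exact avaA_single G v
      · exact hA i
    · rintro (_ | i) (_ | j) hij
      · exact absurd rfl hij
      · exact hex j
      · intro h
        refine hex i ?_
        have h' : AvaA G (F i ∪ {v}) := h
        rwa [Set.union_comm] at h'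
      · exact hC i j (fun h => hij (congrArg some h))

theorem avaP_delete {V : Type} (G : SimpleGraph V) (S : Set V) (v : V) (hv : v ∈ S) (k : ℕ)
    (h2 : 2 ≤ k) (h : AvaP G S k) : ∃ k', k - 1 ≤ k' ∧ AvaP G (S \ {v}) k' := by
  classical
  obtain ⟨ι, _, F, hk, hn, hd, hS, hA, hC⟩ := h
  obtain ⟨a, ha⟩ := (hS v).1 hv
  have hvF : ∀ i x, i ≠ a → x ∈ F i → x ≠ v := by
    rintro i x hi hx rfl
    exact hi (hd _ _ _ hx ha)
  by_cases hex : ∃ b, b ≠ a ∧ AvaA G (F a \ {v} ∪ F b)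
  · obtain ⟨b, hba, hb⟩ := hex
    refine ⟨k - 1, le_rfl, {x : ι // x ≠ a}, inferInstance,
      fun i => {x | x ∈ F i ∨ (i.1 = b ∧ x ∈ F a ∧ x ≠ v)}, ?_, ?_, ?_, ?_, ?_, ?_⟩
    · rw [Fintype.card_subtype_compl, hk]; simp
    · intro i
      obtain ⟨x, hx⟩ := hn i
      exact ⟨x, Or.inl hx⟩
    · rintro ⟨i, hi⟩ ⟨j, hj⟩ x (h | ⟨h, h'⟩) (g | ⟨g, g'⟩)
      · exact Subtype.ext (hd _ _ _ h g)
      · exact absurd (hd _ _ _ h g'.1) hi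
      · exact absurd (hd _ _ _ g h'.1) hj
      · exact Subtype.ext (h.trans g.symm)
    · intro x
      constructor
      · rintro ⟨hx, hxv⟩
        obtain ⟨i, hi⟩ := (hS x).1 hx
        by_cases hia : i = a
        · subst hia
          exact ⟨⟨b, hba⟩, Or.inr ⟨rfl, hi, hxv⟩⟩
        · exact ⟨⟨i, hia⟩, Or.inl hi⟩
      · rintro ⟨⟨i, hia⟩, h | ⟨_, h, hxv⟩⟩
        · exact ⟨(hS x).2 ⟨_, h⟩, hvF _ _ hia h⟩
        · exact ⟨(hS x).2 ⟨_, h⟩, hxv⟩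
    · rintro ⟨i, hia⟩
      by_cases hi : i = b
      · subst hi
        refine avaA_mono G ?_ hb
        rintro x (h | ⟨_, h⟩)
        · exact Or.inr h
        · exact Or.inl h
      · refine avaA_mono G ?_ (hA i)
        rintro x (h | ⟨h, _⟩)
        · exact h
        · exact absurd h hi
    · rintro ⟨i, hi⟩ ⟨j, hj⟩ hij h
      refine hC i j (fun h => hij (Subtype.ext h)) (avaA_mono G ?_ h)
      rintro x (h | h)
      · exact Or.inl (Or.inl h)
      · exact Or.inr (Or.inl h)
  · push Not at hex
    have hsub : ∀ i, i ≠ a → F i ⊆ F i \ {v} := fun i hi x hx => ⟨hx, hvF i x hi hx⟩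
    refine ⟨k, by omega, ι, inferInstance, fun i => F i \ {v}, hk, ?_, ?_, ?_, ?_, ?_⟩
    · intro i
      by_cases hi : i = a
      · subst hi
        by_contra hne
        rw [Set.not_nonempty_iff_eq_empty] at hne
        obtain ⟨b, hb⟩ := Fintype.exists_ne_of_one_lt_card (by omega : 1 < Fintype.card ι) i
        apply hex b hb
        rw [show F i \ {v} = ∅ from hne, Set.empty_union]
        exact hA b
      · exact (hn i).mono (hsub i hi)
    · intro i j x hi hj
      exact hd _ _ _ hi.1 hj.1
    · intro x
      simp only [Set.mem_sdiff, hS, exists_and_right]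
    · intro i
      exact avaA_mono G Set.sdiff_subset (hA i)
    · intro i j hij h
      by_cases hi : i = a
      · subst hi
        exact hex j hij.symm (avaA_mono G (Set.union_subset_union_right _ (hsub j hij.symm)) h)
      · by_cases hj : j = a
        · subst hj
          refine hex i hi (avaA_mono G ?_ h)
          rw [Set.union_comm]
          exact Set.union_subset_union_left _ (hsub i hi)
        · exact hC i j hij (avaA_mono G (Set.union_subset_union (hsub i hi) (hsub j hj)) h)

theorem avaP_bdd {V : Type} [Finite V] (G : SimpleGraph V) (S : Set V) :
    BddAbove {k | AvaP G S k} := by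
  classical
  have := Fintype.ofFinite V
  refine ⟨Fintype.card V, ?_⟩
  rintro k ⟨ι, _, F, hk, hn, hd, -⟩
  choose g hg using hn
  rw [← hk]
  refine Fintype.card_le_of_injective g ?_
  intro i j hij
  exact hd i j (g i) (hg i) (hij ▸ hg j)

theorem ava_induce {V : Type} (G : SimpleGraph V) (S : Set V) :
    avertexArboricity (G.induce S) = sSup {k | AvaP G S k} := by
  unfold avertexArboricity
  congr 1
  ext k
  have := avaP_iff G (Subtype.val : S → V) Subtype.val_injective k
  rw [Subtype.range_coe] at this
  exact this

theorem ava_univ {V : Type} (G : SimpleGraph V) :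
    avertexArboricity G = sSup {k | AvaP G Set.univ k} := by
  unfold avertexArboricity
  congr 1
  ext k
  have := avaP_iff G (id : V → V) injective_id k
  rw [Set.range_id] at this
  exact this

theorem avaP_le {V : Type} [Finite V] (G : SimpleGraph V) (S : Set V) (k : ℕ)
    (h : AvaP G S k) : ∃ k', k ≤ k' ∧ AvaP G Set.univ k' := by
  classical
  have := Fintype.ofFinite V
  suffices H : ∀ T : Finset V, ∃ k', k ≤ k' ∧ AvaP G (S ∪ T) k' by
    have := H Finset.univ
    simpa using this
  intro T
  induction T using Finset.induction_on with
  | empty => exact ⟨k, le_rfl, by simpa using h⟩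
  | insert v T hv ih =>
    obtain ⟨k', hk', h'⟩ := ih
    rw [Finset.coe_insert, Set.union_insert]
    by_cases hm : v ∈ S ∪ (T : Set V)
    · rw [Set.insert_eq_of_mem hm]
      exact ⟨k', hk', h'⟩
    · obtain ⟨k2, h2, h3⟩ := avaP_insert G _ v hm k' h'
      exact ⟨k2, hk'.trans h2, h3⟩

theorem ava_mono {V : Type} [Finite V] (G : SimpleGraph V) (S : Set V) :
    avertexArboricity (G.induce S) ≤ avertexArboricity G := by
  rw [ava_induce, ava_univ]
  rcases Set.eq_empty_or_nonempty {k | AvaP G S k} with h | h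
  · rw [h]; simp
  · refine csSup_le h ?_
    intro k hk
    obtain ⟨k', h1, h2⟩ := avaP_le G S k hk
    exact h1.trans (le_csSup (avaP_bdd G _) h2)

theorem avertexArboricity_vertex_deletion :
    (∀ (V : Type) [Fintype V] (G : SimpleGraph V) (v : V),
      avertexArboricity G - 1 ≤ avertexArboricity (G.induce ({v}ᶜ : Set V)) ∧
      avertexArboricity (G.induce ({v}ᶜ : Set V)) ≤ avertexArboricity G) ∧
    (∀ (V : Type) [Fintype V] (G : SimpleGraph V) (S : Set V),
      avertexArboricity (G.induce S) ≤ avertexArboricity G) := by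
  refine ⟨fun V _ G v => ⟨?_, ava_mono G _⟩, fun V _ G S => ava_mono G S⟩
  rw [ava_induce, ava_univ]
  by_cases h2 : 2 ≤ sSup {k | AvaP G Set.univ k}
  · have hne : {k | AvaP G Set.univ k}.Nonempty := by
      by_contra hne
      rw [Set.not_nonempty_iff_eq_empty] at hne
      rw [hne] at h2
      simp at h2
    have hmem := Nat.sSup_mem hne (avaP_bdd G _)
    obtain ⟨k', h3, h4⟩ := avaP_delete G Set.univ v (Set.mem_univ v) _ h2 hmem
    rw [← Set.compl_eq_univ_diff] at h4
    exact h3.trans (le_csSup (avaP_bdd G _) h4)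
  · omega
end

section
/- Let D be a finite digraph and suppose (X, X̄) is a partition of the vertex set of D into two nonempty parts such that no edge of D has its tail in X̄ and its head in X. Let S be the set of edges with tail in X and head in X̄ (a directed cut). Then adi(D) = adi(D − S), where D − S is obtained from D by deleting the edges in S. -/
open Function

theorem hasDicycle_cut_iff {V : Type*} (D : V → V → Prop) (X : Set V)
    (hcut : ∀ a b, D a b → a ∈ Xᶜ → b ∉ X) (S : Set V) :
    HasDicycle (fun a b => D a b ∧ ¬ (a ∈ X ∧ b ∈ Xᶜ)) S ↔ HasDicycle D S := by
  constructor
  · rintro ⟨v, hv⟩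
    exact ⟨v, Relation.TransGen.mono (fun a b h => ⟨h.1, h.2.1, h.2.2.1⟩) _ _ hv⟩
  · rintro ⟨v, hv⟩
    refine ⟨v, ?_⟩
    have key : ∀ a b, Relation.TransGen (fun a b => a ∈ S ∧ b ∈ S ∧ D a b) a b →
        ((a ∉ X → b ∉ X) ∧ ((a ∉ X ∨ b ∈ X) → Relation.TransGen
          (fun a b => a ∈ S ∧ b ∈ S ∧ D a b ∧ ¬ (a ∈ X ∧ b ∈ Xᶜ)) a b)) := by
      intro a b h
      induction h with
      | single h =>
        refine ⟨hcut _ _ h.2.2, fun h' => .single ⟨h.1, h.2.1, h.2.2, fun hh => ?_⟩⟩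
        exact h'.elim (fun g => g hh.1) (fun g => hh.2 g)
      | @tail b c _ h ih =>
        have hbc : b ∉ X → c ∉ X := hcut _ _ h.2.2
        refine ⟨fun g => hbc (ih.1 g), fun h' => ?_⟩
        have hb : a ∉ X ∨ b ∈ X := h'.imp id fun g => by_contra fun n => hbc n g
        refine (ih.2 hb).tail ⟨h.1, h.2.1, h.2.2, fun hh => ?_⟩
        exact h'.elim (fun g => ih.1 g hh.1) (fun g => hh.2 g)
    exact (key v v hv).2 (em' _)

/-- deleting the edges of a directed cut `S = δ⁺(X)` does not change the
adichromatic number: `adi(D) = adi(D − S)`. -/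
theorem adichromatic_directed_cut {V : Type*} [Fintype V] (D : V → V → Prop)
    (hD : Irreflexive D) (X : Set V) (hX : X.Nonempty) (hXc : Xᶜ.Nonempty)
    (hcut : ∀ a b, D a b → a ∈ Xᶜ → b ∉ X) :
    adichromaticNumber D =
      adichromaticNumber (fun a b => D a b ∧ ¬ (a ∈ X ∧ b ∈ Xᶜ)) := by
  simp only [adichromaticNumber, IsCompleteAcyclicColoring, IsAcyclicColoring,
    hasDicycle_cut_iff D X hcut]
end

section
/- For integers n ≥ 1 and k ≥ 3, let D(n,k) be the digraph whose vertex set is the disjoint union of k classes V_1, …, V_k of size n each, with edge set consisting of all arcs from V_i to V_{i+1} for each i (indices modulo k). Then adi(D(n,k)) ≤ k and τ(D(n,k)) = n. -/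
open Function

lemma turan_hasDicycle_iff (n k : ℕ) (hk : 3 ≤ k) (S : Set (Fin k × Fin n)) :
    HasDicycle (fun p q : Fin k × Fin n => q.1.val = (p.1.val + 1) % k) S ↔
      ∀ i, ∃ x, (i, x) ∈ S := by
  constructor
  · rintro ⟨v, hv⟩ i
    by_contra hcon
    push Not at hcon
    let f : Fin k × Fin n → ℕ := fun p =>
      if p.1.val < i.val then p.1.val + k - i.val else p.1.val - i.val
    have hlt : ∀ a b : Fin k × Fin n,
        (a ∈ S ∧ b ∈ S ∧ b.1.val = (a.1.val + 1) % k) → f a < f b := by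
      rintro ⟨a, x⟩ ⟨b, y⟩ ⟨ha, hb, hab⟩
      have h1 : a.val ≠ i.val := fun h => hcon x (by rwa [← Fin.ext h])
      have h2 : b.val ≠ i.val := fun h => hcon y (by rwa [← Fin.ext h])
      have hmod : b.val = if a.val + 1 = k then 0 else a.val + 1 := by
        have := a.isLt
        dsimp only at hab
        split_ifs with h
        · rw [hab, h, Nat.mod_self]
        · rw [hab, Nat.mod_eq_of_lt (by omega)]
      have := a.isLt
      have := b.isLt
      have := i.isLt
      simp only [f]
      split_ifs at * <;> omega
    have key : ∀ w, Relation.TransGen (fun a b : Fin k × Fin n =>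
        a ∈ S ∧ b ∈ S ∧ b.1.val = (a.1.val + 1) % k) v w → f v < f w := by
      intro w hw
      induction hw with
      | single h => exact hlt _ _ h
      | tail _ h ih => exact ih.trans (hlt _ _ h)
    exact lt_irrefl _ (key v hv)
  · intro h
    choose g hg using h
    have hr : ∀ (j : ℕ) (hj : j < k), Relation.ReflTransGen (fun a b : Fin k × Fin n =>
        a ∈ S ∧ b ∈ S ∧ b.1.val = (a.1.val + 1) % k)
        (⟨0, by omega⟩, g ⟨0, by omega⟩) (⟨j, hj⟩, g ⟨j, hj⟩) := by
      intro j
      induction j with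
      | zero => intro _; exact Relation.ReflTransGen.refl
      | succ j ih =>
        intro hj
        exact (ih (by omega)).tail ⟨hg _, hg _, (Nat.mod_eq_of_lt hj).symm⟩
    refine ⟨(⟨0, by omega⟩, g ⟨0, by omega⟩), Relation.TransGen.tail' (hr (k - 1) (by omega)) ⟨hg _, hg _, ?_⟩⟩
    have : k - 1 + 1 = k := by omega
    simp [this]

/-- for the cyclically oriented Turán digraph `D(n,k)` (`n ≥ 1`, `k ≥ 3`),
whose vertices are the pairs in `Fin k × Fin n` (class index first) and whose arcs go from
each class `V_i` to the cyclically next class `V_{i+1}`, we have `adi(D(n,k)) ≤ k` and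
`τ(D(n,k)) = n`. -/
theorem turan_orientation_adi_tau (n k : ℕ) (hn : 1 ≤ n) (hk : 3 ≤ k) :
    adichromaticNumber (fun p q : Fin k × Fin n => q.1.val = (p.1.val + 1) % k) ≤ k ∧
      digraphFVSNumber (fun p q : Fin k × Fin n => q.1.val = (p.1.val + 1) % k) = n := by
  refine ⟨?_, ?_⟩
  · refine csSup_le' ?_
    rintro m ⟨c, _, hac, hcomp⟩
    have h1 : ∀ i : Fin m, ∃ t : Fin k, ∀ x, (t, x) ∉ c ⁻¹' {i} := by
      intro i
      have := hac i
      rw [turan_hasDicycle_iff n k hk] at this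
      push Not at this
      exact this
    choose t ht using h1
    have hinj : Injective t := by
      intro i j hij
      by_contra hne
      obtain ⟨x, hx⟩ := (turan_hasDicycle_iff n k hk _).1 (hcomp i j hne) (t i)
      rcases hx with hx | hx
      · exact ht i x hx
      · exact ht j x (hij ▸ hx)
    simpa using Fintype.card_le_of_injective t hinj
  · unfold digraphFVSNumber
    let F : Fin k → Finset (Fin k × Fin n) := fun i =>
      Finset.univ.map ⟨fun x => (i, x), fun _ _ h => (Prod.ext_iff.1 h).2⟩
    have hF : ∀ i, (F i).card = n := fun i => by simp [F]
    have hmem : n ∈ {m | ∃ F : Finset (Fin k × Fin n), F.card = m ∧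
        ¬ HasDicycle (fun p q : Fin k × Fin n => q.1.val = (p.1.val + 1) % k)
          ((↑F : Set (Fin k × Fin n))ᶜ)} := by
      refine ⟨F ⟨0, by omega⟩, hF _, ?_⟩
      rw [turan_hasDicycle_iff n k hk]
      intro h
      obtain ⟨x, hx⟩ := h ⟨0, by omega⟩
      exact hx (by simp only [F, Finset.coe_map, Finset.coe_univ, Set.image_univ]; exact ⟨x, rfl⟩)
    refine le_antisymm (Nat.sInf_le hmem) (le_csInf ⟨n, hmem⟩ ?_)
    rintro m ⟨G, rfl, hG⟩
    rw [turan_hasDicycle_iff n k hk] at hG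
    push Not at hG
    obtain ⟨i, hi⟩ := hG
    refine (hF i).symm.le.trans ?_
    apply Finset.card_le_card
    intro p hp
    simp only [F, Finset.mem_map, Finset.mem_univ, true_and, Embedding.coeFn_mk] at hp
    obtain ⟨x, rfl⟩ := hp
    have := hi x
    simp only [Set.mem_compl_iff, not_not, Finset.mem_coe] at this
    exact this
end
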